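/- Let (X,T) be a dynamical system and let x ∈ X be a point that is not isolated in X. Then the orbit Orb(x) is dense in X if and only if x is pseudo-ergodic. -/

import Mathlib

/-!
Homeomorphisms preserve isolated points, so no point on the orbit of a non-isolated point is
isolated. If that orbit is dense, an isolated point of `X` would lie on it, so `X` is perfect.
A dense set in a perfect T₁ space stays dense after deleting finitely many points, hence every `y`
is a cluster point of `n ↦ Tⁿ x` along the cofinite filter of `ℤ`. This filter is `atBot ⊔ atTop`,
and clustering along its two halves means membership in `L⁻(x)` and in `L⁺(x)`.
-/

open Filter Topology Set

/-- The `n`-th iterate of a homeomorphism `T` (negative `n` uses `T⁻¹`). -/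
def iterate {X : Type*} [TopologicalSpace X] (T : X ≃ₜ X) (n : ℤ) (x : X) : X :=
  (T.toEquiv ^ n) x

/-- The limit set `L⁺(x)`. -/
def Lplus {X : Type*} [TopologicalSpace X] (T : X ≃ₜ X) (x : X) : Set X :=
  {y | ∃ h : ℕ → ℕ, Tendsto h atTop atTop ∧
    Tendsto (fun k => iterate T (h k : ℤ) x) atTop (𝓝 y)}

/-- The limit set `L⁻(x)`. -/
def Lminus {X : Type*} [TopologicalSpace X] (T : X ≃ₜ X) (x : X) : Set X :=
  {y | ∃ h : ℕ → ℕ, Tendsto h atTop atTop ∧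
    Tendsto (fun k => iterate T (-(h k : ℤ)) x) atTop (𝓝 y)}

/-- The orbit `Orb(x) = {Tⁿ x : n ∈ ℤ}`. -/
def orb {X : Type*} [TopologicalSpace X] (T : X ≃ₜ X) (x : X) : Set X :=
  Set.range fun n : ℤ => iterate T n x

section ClusterPoints

variable {X ι : Type*} [TopologicalSpace X] {u : ι → X} {y : X} {F : Filter ι}

theorem mapClusterPt_sup {G : Filter ι} :
    MapClusterPt y (F ⊔ G) u ↔ MapClusterPt y F u ∨ MapClusterPt y G u := by
  simp only [mapClusterPt_def, map_sup, clusterPt_sup]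

theorem mapClusterPt_iff_exists_seq_tendsto [FirstCountableTopology X] [F.IsCountablyGenerated] :
    MapClusterPt y F u ↔
      ∃ φ : ℕ → ι, Tendsto φ atTop F ∧ Tendsto (fun k => u (φ k)) atTop (𝓝 y) := by
  constructor
  · intro h
    obtain ⟨φ, hy, hF⟩ := h.exists_seq_tendsto
    exact ⟨φ, hF, hy⟩
  · rintro ⟨φ, hF, hy⟩
    exact .of_comp hF hy.mapClusterPt

theorem mem_closure_range_of_mapClusterPt (h : MapClusterPt y F u) : y ∈ closure (range u) :=
  h.clusterPt.mem_closure_of_mem _ range_mem_map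

theorem mapClusterPt_cofinite_of_denseRange [T1Space X] [PerfectSpace X] (hu : DenseRange u)
    (y : X) : MapClusterPt y cofinite u := by
  refine mapClusterPt_iff_frequently.2 fun s hs => frequently_cofinite_iff_infinite.2 fun hfin => ?_
  have hdense : Dense (range u \ u '' {i | u i ∈ s}) := hu.sdiff_finite (hfin.image u)
  obtain ⟨_, his, ⟨i, rfl⟩, hi⟩ := mem_closure_iff_nhds.1 (hdense y) s hs
  exact hi (mem_image_of_mem u his)

end ClusterPoints

section IsolatedPoints

variable {X : Type*} [TopologicalSpace X]

theorem perfectSpace_of_dense {s : Set X} (hs : Dense s) (h : ∀ z ∈ s, (𝓝[≠] z).NeBot) :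
    PerfectSpace X := by
  refine perfectSpace_iff_forall_not_isolated.2 fun y => ⟨fun hy => ?_⟩
  have hopen : IsOpen {y} := (isOpen_singleton_iff_punctured_nhds y).2 hy
  obtain ⟨_, rfl, hys⟩ := hs.inter_open_nonempty _ hopen (singleton_nonempty y)
  exact (h _ hys).ne hy

theorem iterate_eq_zpow (T : X ≃ₜ X) (n : ℤ) : iterate T n = ⇑(T ^ n) := by
  let toPerm : (X ≃ₜ X) →* Equiv.Perm X :=
    { toFun := Homeomorph.toEquiv, map_one' := rfl, map_mul' := fun _ _ => rfl }
  exact congrArg DFunLike.coe (map_zpow toPerm T n).symm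

theorem perfectSpace_of_dense_orb {T : X ≃ₜ X} {x : X} (hx : (𝓝[≠] x).NeBot)
    (hT : Dense (orb T x)) : PerfectSpace X := by
  refine perfectSpace_of_dense hT ?_
  rintro _ ⟨n, rfl⟩
  simp only [iterate_eq_zpow, ← Homeomorph.map_punctured_nhds_eq]
  exact hx.map _

end IsolatedPoints

section LimitSets

variable {X : Type*} [TopologicalSpace X] [FirstCountableTopology X] {T : X ≃ₜ X} {x y : X}

theorem mem_Lplus_iff_mapClusterPt :
    y ∈ Lplus T x ↔ MapClusterPt y atTop fun n : ℤ => iterate T n x := by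
  rw [← Nat.map_cast_int_atTop, ← mapClusterPt_comp, mapClusterPt_iff_exists_seq_tendsto]
  rfl

theorem mem_Lminus_iff_mapClusterPt :
    y ∈ Lminus T x ↔ MapClusterPt y atBot fun n : ℤ => iterate T n x := by
  rw [← map_neg_atTop, ← Nat.map_cast_int_atTop, ← mapClusterPt_comp, ← mapClusterPt_comp,
    mapClusterPt_iff_exists_seq_tendsto]
  rfl

theorem mem_Lplus_union_Lminus_iff_mapClusterPt :
    y ∈ Lplus T x ∪ Lminus T x ↔ MapClusterPt y cofinite fun n : ℤ => iterate T n x := by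
  rw [Int.cofinite_eq, mapClusterPt_sup, ← mem_Lplus_iff_mapClusterPt,
    ← mem_Lminus_iff_mapClusterPt, mem_union, or_comm]

end LimitSets

theorem dense_orbit_iff_pseudoErgodic_of_not_isolated_general
    {X : Type*} [TopologicalSpace X] [T1Space X] [FirstCountableTopology X] (T : X ≃ₜ X) (x : X)
    (hx : (𝓝[≠] x).NeBot) :
    Dense (orb T x) ↔ Lplus T x ∪ Lminus T x = Set.univ := by
  simp only [eq_univ_iff_forall, mem_Lplus_union_Lminus_iff_mapClusterPt]
  constructor
  · intro hdense
    have : PerfectSpace X := perfectSpace_of_dense_orb hx hdense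
    exact mapClusterPt_cofinite_of_denseRange hdense
  · exact fun hcluster y => mem_closure_range_of_mapClusterPt (hcluster y)

theorem dense_orbit_iff_pseudoErgodic_of_not_isolated
    {X : Type*} [MetricSpace X] [CompactSpace X] (T : X ≃ₜ X) (x : X)
    (hx : (𝓝[≠] x).NeBot) :
    Dense (orb T x) ↔ Lplus T x ∪ Lminus T x = Set.univ :=
  dense_orbit_iff_pseudoErgodic_of_not_isolated_general T x hx
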